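/- Let X ~ N(μ₀,σ₀²), σ₀ > 0, and for parameters (μ,σ) let X̂₁,...,X̂_P be i.i.d. N(μ,σ²) independent of X, with P ≥ 2. Define the regularizer L(μ,σ) = E|X − (1/P)∑ᵢX̂ᵢ| − β·γ_P·E[(1/P)∑ᵢ|X̂ᵢ − (1/P)∑ₖX̂ₖ|], where γ_P = √(πP/(2(P−1))) and β = √(2/(πP(P+1))). Then the unique minimizer of L over (μ,σ) ∈ ℝ × (0,∞) is (μ₀, σ₀). -/

import Mathlib

open MeasureTheory ProbabilityTheory
open scoped NNReal

/-- The joint law of a true sample `X ~ N(μ₀,σ₀²)` and `P` independent generated samples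
`X̂ᵢ ~ i.i.d. N(m,σ²)`, realized on the canonical space `ℝ × (Fin P → ℝ)`. -/
noncomputable def jointLaw (μ₀ σ₀ : ℝ) (P : ℕ) (m σ : ℝ) : Measure (ℝ × (Fin P → ℝ)) :=
  (gaussianReal μ₀ ⟨σ₀ ^ 2, sq_nonneg σ₀⟩).prod
    (Measure.pi fun _ : Fin P => gaussianReal m ⟨σ ^ 2, sq_nonneg σ⟩)

/-- The regularizer `L(m,σ) = E|X − (1/P)∑ᵢX̂ᵢ| − β·γ_P·E[(1/P)∑ᵢ|X̂ᵢ − (1/P)∑ₖX̂ₖ|]`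
with `γ_P = √(πP/(2(P−1)))` and `β = √(2/(πP(P+1)))`, where `X ~ N(μ₀,σ₀²)` and
`X̂₁,...,X̂_P` are i.i.d. `N(m,σ²)` independent of `X`. -/
noncomputable def regLoss (μ₀ σ₀ : ℝ) (P : ℕ) (m σ : ℝ) : ℝ :=
  (∫ p, |p.1 - (∑ i, p.2 i) / (P : ℝ)| ∂(jointLaw μ₀ σ₀ P m σ))
    - Real.sqrt (2 / (Real.pi * P * (P + 1))) * Real.sqrt (Real.pi * P / (2 * (P - 1)))
      * ∫ p, (∑ i, |p.2 i - (∑ k, p.2 k) / (P : ℝ)|) / (P : ℝ) ∂(jointLaw μ₀ σ₀ P m σ)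

lemma jointLaw_eq (μ₀ σ₀ : ℝ) (P : ℕ) (m σ : ℝ) : jointLaw μ₀ σ₀ P m σ =
    (gaussianReal μ₀ (NNReal.mk (σ₀ ^ 2) (sq_nonneg σ₀))).prod
      (Measure.pi fun _ : Fin P => gaussianReal m (NNReal.mk (σ ^ 2) (sq_nonneg σ))) := rfl

lemma lin_law (μ₀ σ₀ : ℝ) (P : ℕ) (m σ : ℝ) (a0 : ℝ) (a : Fin P → ℝ) :
    (jointLaw μ₀ σ₀ P m σ).map (fun p => a0 * p.1 + ∑ i, a i * p.2 i) =
      gaussianReal (a0 * μ₀ + (∑ i, a i) * m)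
        (Real.toNNReal (a0 ^ 2 * σ₀ ^ 2 + (∑ i, a i ^ 2) * σ ^ 2)) := by
  have hprob : IsProbabilityMeasure (jointLaw μ₀ σ₀ P m σ) := by
    rw [jointLaw_eq]; infer_instance
  have hmeas : Measurable (fun p : ℝ × (Fin P → ℝ) => a0 * p.1 + ∑ i, a i * p.2 i) := by
    fun_prop
  have := Measure.isProbabilityMeasure_map (μ := jointLaw μ₀ σ₀ P m σ) hmeas.aemeasurable
  apply Measure.ext_of_charFun
  ext t
  rw [charFun_gaussianReal, charFun_apply_real, integral_map hmeas.aemeasurable (by fun_prop)]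
  have h1 : ∀ p : ℝ × (Fin P → ℝ),
      Complex.exp (t * ((a0 * p.1 + ∑ i, a i * p.2 i : ℝ) : ℂ) * Complex.I)
      = Complex.exp (((t * a0 : ℝ) : ℂ) * p.1 * Complex.I)
        * ∏ i, Complex.exp (((t * a i : ℝ) : ℂ) * p.2 i * Complex.I) := by
    intro p
    rw [← Complex.exp_sum, ← Complex.exp_add]
    congr 1
    push_cast
    rw [← Finset.sum_mul, mul_add, add_mul, Finset.mul_sum]
    simp only [mul_assoc]
  simp_rw [h1]
  rw [jointLaw_eq]
  rw [integral_prod_mul (fun x : ℝ => Complex.exp (((t * a0 : ℝ) : ℂ) * x * Complex.I))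
    (fun y : Fin P → ℝ => ∏ i, Complex.exp (((t * a i : ℝ) : ℂ) * y i * Complex.I)),
    integral_fintype_prod_eq_prod
      (fun (i : Fin P) (y : ℝ) => Complex.exp (((t * a i : ℝ) : ℂ) * y * Complex.I))]
  simp_rw [← charFun_apply_real, charFun_gaussianReal]
  rw [← Complex.exp_sum, ← Complex.exp_add]
  congr 1
  have hv : ((Real.toNNReal (a0 ^ 2 * σ₀ ^ 2 + (∑ i, a i ^ 2) * σ ^ 2) : ℝ≥0) : ℝ)
      = a0 ^ 2 * σ₀ ^ 2 + (∑ i, a i ^ 2) * σ ^ 2 :=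
    Real.coe_toNNReal _ (by positivity)
  rw [hv]
  simp only [NNReal.coe_mk]
  push_cast
  rw [Finset.sum_sub_distrib]
  have e1 : ∑ x, (t : ℂ) * (a x : ℂ) * m * Complex.I = t * (∑ x, (a x : ℂ)) * m * Complex.I := by
    rw [Finset.mul_sum, Finset.sum_mul, Finset.sum_mul]
  have e2 : ∑ x, (σ : ℂ) ^ 2 * ((t : ℂ) * (a x : ℂ)) ^ 2 / 2
      = σ ^ 2 * t ^ 2 * (∑ x, (a x : ℂ) ^ 2) / 2 := by
    rw [Finset.mul_sum, Finset.sum_div]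
    refine Finset.sum_congr rfl fun i _ => by ring
  rw [e1, e2]
  ring

/-- the mean absolute value of a Gaussian -/
noncomputable def gAbs (a : ℝ) (v : ℝ≥0) : ℝ := ∫ x, |x| ∂(gaussianReal a v)

lemma int_abs_add (a b : ℝ) (v : ℝ≥0) : Integrable (fun x => |x + b|) (gaussianReal a v) := by
  have h : Integrable (fun x : ℝ => x) (gaussianReal a v) :=
    (memLp_id_gaussianReal (μ := a) (v := v) 1).integrable (by simp)
  exact (h.add (integrable_const b)).abs

lemma gAbs_shift (a : ℝ) (v : ℝ≥0) : gAbs a v = ∫ x, |x + a| ∂(gaussianReal 0 v) := by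
  have h := gaussianReal_map_add_const (μ := 0) (v := v) a
  rw [zero_add] at h
  rw [gAbs, ← h, integral_map (by fun_prop) (by fun_prop)]

lemma gAbs_shift' (a : ℝ) (v : ℝ≥0) : gAbs a v = ∫ x, |x + -a| ∂(gaussianReal 0 v) := by
  have h := gaussianReal_map_neg (μ := 0) (v := v)
  rw [neg_zero] at h
  rw [gAbs_shift]
  conv_lhs => rw [← h]
  rw [integral_map (by fun_prop) (by fun_prop)]
  congr 1
  ext x
  rw [← abs_neg]; congr 1; ring

lemma gAbs_lt (a : ℝ) (v : ℝ≥0) (hv : v ≠ 0) (ha : a ≠ 0) : gAbs 0 v < gAbs a v := by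
  have i0 := int_abs_add 0 0 v
  simp only [add_zero] at i0
  have hpos : 0 < ∫ x, (|x + a| + |x + -a| - 2 * |x|) ∂(gaussianReal 0 v) := by
    have hn : ∀ x : ℝ, 0 ≤ |x + a| + |x + -a| - 2 * |x| := by
      intro x
      have := abs_add_le (x + a) (x + -a)
      have h2 : |x + a + (x + -a)| = 2 * |x| := by
        rw [show x + a + (x + -a) = 2 * x by ring, abs_mul]; simp
      linarith
    rw [integral_pos_iff_support_of_nonneg hn
      (((int_abs_add 0 a v).add (int_abs_add 0 (-a) v)).sub (i0.const_mul 2))]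
    rw [pos_iff_ne_zero]
    intro h0
    have h1 := gaussianReal_absolutelyContinuous' 0 hv h0
    have hopen : IsOpen (Function.support fun x : ℝ => |x + a| + |x + -a| - 2 * |x|) := by
      apply Continuous.isOpen_support; fun_prop
    have := hopen.measure_eq_zero_iff (volume) |>.1 h1
    have hm : (0 : ℝ) ∈ Function.support fun x : ℝ => |x + a| + |x + -a| - 2 * |x| := by
      simp [ha]
    rw [this] at hm
    exact hm
  have i1 : Integrable (fun x => |x + a| + |x + -a|) (gaussianReal 0 v) :=
    (int_abs_add 0 a v).add (int_abs_add 0 (-a) v)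
  rw [integral_sub i1 (i0.const_mul 2),
    integral_add (int_abs_add 0 a v) (int_abs_add 0 (-a) v), integral_const_mul,
    ← gAbs_shift, ← gAbs_shift'] at hpos
  unfold gAbs at *
  linarith

lemma gAbs_scale (w : ℝ) : gAbs 0 (Real.toNNReal w) = Real.sqrt w * gAbs 0 1 := by
  have h := gaussianReal_map_const_mul (μ := 0) (v := 1) (Real.sqrt w)
  have hv : (NNReal.mk (Real.sqrt w ^ 2) (sq_nonneg _) * 1 : ℝ≥0) = Real.toNNReal w := by
    ext
    rcases le_total 0 w with hw | hw
    · simp [Real.sq_sqrt hw, hw]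
    · simp [Real.sqrt_eq_zero_of_nonpos hw, hw]
  rw [hv, mul_zero] at h
  rw [gAbs, ← h, integral_map (by fun_prop) (by fun_prop), gAbs, ← integral_const_mul]
  congr 1
  ext x
  rw [abs_mul, abs_of_nonneg (Real.sqrt_nonneg _)]

lemma gAbs_one_pos : 0 < gAbs 0 1 := by
  have i0 := int_abs_add 0 0 1
  simp only [add_zero] at i0
  unfold gAbs
  rw [integral_pos_iff_support_of_nonneg (fun x => abs_nonneg x) i0, pos_iff_ne_zero]
  intro h0
  have h1 := gaussianReal_absolutelyContinuous' 0 one_ne_zero h0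
  have hopen : IsOpen (Function.support fun x : ℝ => |x|) := by
    apply Continuous.isOpen_support; fun_prop
  have := hopen.measure_eq_zero_iff (volume) |>.1 h1
  have hm : (1 : ℝ) ∈ Function.support fun x : ℝ => |x| := by simp
  rw [this] at hm
  exact hm

lemma lin_abs (μ₀ σ₀ : ℝ) (P : ℕ) (m σ : ℝ) (a0 : ℝ) (a : Fin P → ℝ) :
    ∫ p, |a0 * p.1 + ∑ i, a i * p.2 i| ∂(jointLaw μ₀ σ₀ P m σ) =
      gAbs (a0 * μ₀ + (∑ i, a i) * m)
        (Real.toNNReal (a0 ^ 2 * σ₀ ^ 2 + (∑ i, a i ^ 2) * σ ^ 2)) := by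
  rw [gAbs, ← lin_law, integral_map (by fun_prop) (by fun_prop)]

lemma lin_int (μ₀ σ₀ : ℝ) (P : ℕ) (m σ : ℝ) (a0 : ℝ) (a : Fin P → ℝ) :
    Integrable (fun p => |a0 * p.1 + ∑ i, a i * p.2 i|) (jointLaw μ₀ σ₀ P m σ) := by
  have h := int_abs_add (a0 * μ₀ + (∑ i, a i) * m) 0
        (Real.toNNReal (a0 ^ 2 * σ₀ ^ 2 + (∑ i, a i ^ 2) * σ ^ 2))
  simp only [add_zero] at h
  rw [← lin_law, integrable_map_measure (by fun_prop) (by fun_prop)] at h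
  exact h

lemma regLoss_eq (μ₀ σ₀ : ℝ) (P : ℕ) (hP : 2 ≤ P) (m σ : ℝ) (hσ : 0 < σ) :
    regLoss μ₀ σ₀ P m σ = gAbs (μ₀ - m) (Real.toNNReal (σ₀ ^ 2 + σ ^ 2 / P))
      - σ / Real.sqrt (P * (P + 1)) * gAbs 0 1 := by
  have hP2 : (2 : ℝ) ≤ P := by exact_mod_cast hP
  have hP0 : (0 : ℝ) < P := by linarith
  have hP1 : (0 : ℝ) < P - 1 := by linarith
  unfold regLoss
  have A : ∫ p, |p.1 - (∑ i, p.2 i) / (P : ℝ)| ∂(jointLaw μ₀ σ₀ P m σ)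
      = gAbs (μ₀ - m) (Real.toNNReal (σ₀ ^ 2 + σ ^ 2 / P)) := by
    have h := lin_abs μ₀ σ₀ P m σ 1 (fun _ => -(1 / P))
    have e : ∀ p : ℝ × (Fin P → ℝ), 1 * p.1 + ∑ i, -(1 / (P : ℝ)) * p.2 i
        = p.1 - (∑ i, p.2 i) / (P : ℝ) := by
      intro p; rw [← Finset.mul_sum]; ring
    simp_rw [e] at h
    rw [h]
    simp only [Finset.sum_const, Finset.card_univ, Fintype.card_fin, nsmul_eq_mul]
    congr 2 <;> field_simp
  let b : Fin P → Fin P → ℝ := fun i k => (if k = i then 1 else 0) - 1 / P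
  have e : ∀ (i : Fin P) (p : ℝ × (Fin P → ℝ)), p.2 i - (∑ k, p.2 k) / (P : ℝ)
      = 0 * p.1 + ∑ k, b i k * p.2 k := by
    intro i p
    simp only [b, sub_mul, Finset.sum_sub_distrib, ← Finset.mul_sum]
    simp
    ring
  have sb : ∀ i, ∑ k, b i k = 0 := by
    intro i
    simp only [b, Finset.sum_sub_distrib]
    simp [hP0.ne']
  have sb2 : ∀ i, ∑ k, b i k ^ 2 = (P - 1) / P := by
    intro i
    have : ∀ k, b i k ^ 2 = (if k = i then 1 - 2 / (P : ℝ) else 0) + 1 / P ^ 2 := by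
      intro k; simp only [b]; split_ifs <;> ring
    simp only [this, Finset.sum_add_distrib]
    simp
    field_simp
    ring
  have B : ∫ p, (∑ i, |p.2 i - (∑ k, p.2 k) / (P : ℝ)|) / (P : ℝ) ∂(jointLaw μ₀ σ₀ P m σ)
      = Real.sqrt ((P - 1) / P) * σ * gAbs 0 1 := by
    simp_rw [e]
    rw [integral_div, integral_finsetSum _ (fun i _ => lin_int μ₀ σ₀ P m σ 0 (b i))]
    simp_rw [lin_abs, sb, sb2]
    simp only [zero_mul, add_zero, Finset.sum_const, Finset.card_univ, Fintype.card_fin,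
      nsmul_eq_mul, ne_eq, OfNat.ofNat_ne_zero, not_false_eq_true, zero_pow, zero_add]
    rw [gAbs_scale, Real.sqrt_mul (by positivity), Real.sqrt_sq hσ.le]
    field_simp
  rw [A, B]
  have C : Real.sqrt (2 / (Real.pi * P * (P + 1))) * Real.sqrt (Real.pi * P / (2 * (P - 1)))
      * Real.sqrt ((P - 1) / P) = 1 / Real.sqrt (P * (P + 1)) := by
    have hpi := Real.pi_pos
    rw [← Real.sqrt_mul (by positivity), ← Real.sqrt_mul (by positivity), one_div,
      ← Real.sqrt_inv]
    congr 1
    field_simp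
  linear_combination (-σ * gAbs 0 1) * C

lemma key (P : ℝ) (hP : 0 < P) (s t : ℝ) (hs : 0 < s) (ht : 0 < t) :
    Real.sqrt (s ^ 2 + s ^ 2 / P) - s / Real.sqrt (P * (P + 1))
      ≤ Real.sqrt (s ^ 2 + t ^ 2 / P) - t / Real.sqrt (P * (P + 1)) ∧
    (t ≠ s → Real.sqrt (s ^ 2 + s ^ 2 / P) - s / Real.sqrt (P * (P + 1))
      < Real.sqrt (s ^ 2 + t ^ 2 / P) - t / Real.sqrt (P * (P + 1))) := by
  set R := Real.sqrt (P * (P + 1)) with hR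
  have hR0 : 0 < R := Real.sqrt_pos.2 (by positivity)
  have hR2 : R ^ 2 = P * (P + 1) := Real.sq_sqrt (by positivity)
  have e1 : Real.sqrt (s ^ 2 + s ^ 2 / P) = s * (P + 1) / R := by
    rw [Real.sqrt_eq_iff_mul_self_eq (by positivity) (by positivity)]
    field_simp
    rw [hR2]
  have e2 : s * (P + 1) / R - s / R = (s * P + t) / R - t / R := by ring
  have hsq : ((s * P + t) / R) ^ 2 + (s - t) ^ 2 / (P + 1) = s ^ 2 + t ^ 2 / P := by
    rw [div_pow, hR2]; field_simp; ring
  rw [e1, e2]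
  constructor
  · have : (s * P + t) / R ≤ Real.sqrt (s ^ 2 + t ^ 2 / P) := by
      apply Real.le_sqrt_of_sq_le
      rw [← hsq]
      have : 0 ≤ (s - t) ^ 2 / (P + 1) := by positivity
      linarith
    linarith
  · intro hne
    have : (s * P + t) / R < Real.sqrt (s ^ 2 + t ^ 2 / P) := by
      apply Real.lt_sqrt_of_sq_lt
      rw [← hsq]
      have h : s - t ≠ 0 := sub_ne_zero.2 hne.symm
      have : 0 < (s - t) ^ 2 / (P + 1) := by positivity
      linarith
    linarith

/-- With `σ₀ > 0` and `P ≥ 2`, the unique minimizer of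
`L(m,σ)` over `(m,σ) ∈ ℝ × (0,∞)` is `(μ₀, σ₀)`. -/
theorem stmt7 (μ₀ σ₀ : ℝ) (hσ₀ : 0 < σ₀) (P : ℕ) (hP : 2 ≤ P) :
    ∀ m σ : ℝ, 0 < σ → (m, σ) ≠ (μ₀, σ₀) →
      regLoss μ₀ σ₀ P μ₀ σ₀ < regLoss μ₀ σ₀ P m σ := by
  intro m σ hσ hne
  have hP0 : (0 : ℝ) < P := by exact_mod_cast (by omega : 0 < P)
  rw [regLoss_eq μ₀ σ₀ P hP μ₀ σ₀ hσ₀, regLoss_eq μ₀ σ₀ P hP m σ hσ, sub_self]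
  have hc := gAbs_one_pos
  obtain ⟨k1, k2⟩ := key P hP0 σ₀ σ hσ₀ hσ
  have h1 := mul_le_mul_of_nonneg_right k1 hc.le
  have hs := gAbs_scale (σ₀ ^ 2 + σ ^ 2 / P)
  have hs0 := gAbs_scale (σ₀ ^ 2 + σ₀ ^ 2 / P)
  by_cases hm : m = μ₀
  · subst hm
    have hσne : σ ≠ σ₀ := fun h => hne (by rw [h])
    have h2 := mul_lt_mul_of_pos_right (k2 hσne) hc
    rw [sub_self, hs, hs0]
    linarith
  · have h3 := gAbs_lt (μ₀ - m) (Real.toNNReal (σ₀ ^ 2 + σ ^ 2 / P))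
      (by
        have : 0 < Real.toNNReal (σ₀ ^ 2 + σ ^ 2 / P) := Real.toNNReal_pos.2 (by positivity)
        exact this.ne') (sub_ne_zero.2 (Ne.symm hm))
    rw [hs] at h3
    rw [hs0]
    linarith
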